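/- arXiv:2301.09751 — 4 statements merged into one kernel-verified Lean document; each statement's English description precedes it below -/
import Mathlib

section
/- Let α ∈ (0,1), 0 < H₁ < H₂ < 1, a ∈ ℝ, b ≠ 0, and assume 0 < 2αH₁ − αH₂ < 1. Fix s > 0. Then there exist a constant c > 0 and an exponent d ∈ (0,1) such that lim_{t→∞} t^d · Corr(t,s) = c, i.e. the correlation of the time-changed fractional mixed fractional Brownian motion decays like a power law t^{−d} with 0 < d < 1 (long-range dependence). -/
open Filter Real

lemma aux_pow (e : ℝ) (he : e ≤ 0) :
    Tendsto (fun t : ℝ => t ^ e) atTop (nhds (if e = 0 then 1 else 0)) := by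
  split_ifs with h
  · subst h; simp
  · have h1 : 0 < -e := by
      rcases lt_or_eq_of_le he with h2 | h2
      · linarith
      · exact absurd h2 h
    simpa using tendsto_rpow_neg_atTop h1

lemma aux_slope (r s : ℝ) (hs : 0 < s) :
    Tendsto (fun t : ℝ => t ^ (1 - r) * (t ^ r - (t - s) ^ r)) atTop (nhds (r * s)) := by
  have hd : HasDerivAt (fun x : ℝ => (1 - s * x) ^ r) (-(r * s)) 0 := by
    have h1 : HasDerivAt (fun x : ℝ => 1 - s * x) (-s) 0 := by
      simpa using ((hasDerivAt_id (0 : ℝ)).const_mul s).const_sub 1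
    have h2 := h1.rpow_const (p := r) (Or.inl (by simp))
    convert h2 using 1
    simp
    ring
  have h3 := hd.tendsto_slope
  have h4 : Tendsto (fun t : ℝ => t⁻¹) atTop (nhdsWithin 0 {0}ᶜ) :=
    tendsto_inv_atTop_nhdsGT_zero.mono_right (nhdsWithin_mono _ (fun x hx => by
      simpa using (ne_of_gt hx)))
  have h5 := (h3.comp h4).neg
  rw [neg_neg] at h5
  refine h5.congr' ?_
  filter_upwards [eventually_gt_atTop s] with t ht
  have ht0 : 0 < t := hs.trans ht
  have e1 : t - s = t * (1 - s * t⁻¹) := by field_simp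
  have h6 : 0 ≤ 1 - s * t⁻¹ := by
    rw [← div_eq_mul_inv, sub_nonneg, div_le_one ht0]; exact ht.le
  have e2 : t ^ (1 - r) * t ^ r = t := by
    rw [← rpow_add ht0]; simp
  rw [e1, mul_rpow ht0.le h6]
  simp only [Function.comp, slope_def_field, mul_zero, sub_zero, one_rpow, div_inv_eq_mul]
  linear_combination (-(1 - (1 - s * t⁻¹) ^ r)) * e2

lemma aux_main (r s m : ℝ) (hr : 0 < r) (hs : 0 < s) (hm : 0 ≤ m) (hm1 : r - 1 ≤ m) :
    ∃ L : ℝ, 0 ≤ L ∧ (m = 0 ∨ m = r - 1 → 0 < L) ∧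
      Tendsto (fun t : ℝ => t ^ (-m) * (t ^ r + s ^ r - (t - s) ^ r)) atTop (nhds L) := by
  have hsr : 0 < s ^ r := rpow_pos_of_pos hs r
  refine ⟨(if -m = 0 then 1 else 0) * s ^ r + (if r - 1 - m = 0 then 1 else 0) * (r * s),
    ?_, ?_, ?_⟩
  · split_ifs <;> positivity
  · intro h
    rcases h with h | h
    · rw [if_pos (by linarith)]
      split_ifs <;> positivity
    · rw [if_pos (c := r - 1 - m = 0) (by linarith)]
      split_ifs <;> positivity
  · have h := ((aux_pow (-m) (by linarith)).mul_const (s ^ r)).add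
      ((aux_pow (r - 1 - m) (by linarith)).mul (aux_slope r s hs))
    refine h.congr' ?_
    filter_upwards [eventually_gt_atTop 0] with t ht
    have e : t ^ (r - 1 - m) * t ^ (1 - r) = t ^ (-m) := by
      rw [← rpow_add ht]; congr 1; ring
    linear_combination (t ^ r - (t - s) ^ r) * e


/-- Long-range dependence of the time-changed fractional mixed fractional Brownian
motion: with covariance `R` and variance `V` as in the paper, for fixed `s > 0` and
`H₁ < H₂`, `0 < 2αH₁ - αH₂ < 1`, there are `c > 0` and `d ∈ (0,1)` with
`t^d · Corr(t,s) → c` as `t → ∞`. -/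
theorem fmfBm_time_changed_correlation_long_range_dependence
    (α H₁ H₂ a b s : ℝ)
    (hα : 0 < α) (hα1 : α < 1)
    (hH₁ : 0 < H₁) (hH₁₂ : H₁ < H₂) (hH₂ : H₂ < 1)
    (hb : b ≠ 0)
    (hd1 : 0 < 2 * α * H₁ - α * H₂) (hd2 : 2 * α * H₁ - α * H₂ < 1)
    (hs : 0 < s)
    (R : ℝ → ℝ → ℝ)
    (hR : ∀ u v : ℝ, R u v =
      a ^ 2 * (u ^ (2 * α * H₁) + v ^ (2 * α * H₁) - (u - v) ^ (2 * α * H₁)) /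
        (2 * Gamma (α + 1) ^ (2 * H₁)) +
      b ^ 2 * (u ^ (2 * α * H₂) + v ^ (2 * α * H₂) - (u - v) ^ (2 * α * H₂)) /
        (2 * Gamma (α + 1) ^ (2 * H₂)))
    (V : ℝ → ℝ)
    (hV : ∀ u : ℝ, V u =
      a ^ 2 * u ^ (2 * α * H₁) / Gamma (α + 1) ^ (2 * H₁) +
      b ^ 2 * u ^ (2 * α * H₂) / Gamma (α + 1) ^ (2 * H₂)) :
    ∃ c > 0, ∃ d ∈ Set.Ioo (0 : ℝ) 1,
      Tendsto (fun t : ℝ => t ^ d * (R t s / Real.sqrt (V t * V s)))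
        atTop (nhds c) := by

  have hG : 0 < Gamma (α + 1) := Gamma_pos_of_pos (by linarith)
  have hG1 : 0 < Gamma (α + 1) ^ (2 * H₁) := rpow_pos_of_pos hG _
  have hG2 : 0 < Gamma (α + 1) ^ (2 * H₂) := rpow_pos_of_pos hG _
  generalize Gamma (α + 1) ^ (2 * H₁) = g₁ at *
  generalize Gamma (α + 1) ^ (2 * H₂) = g₂ at *
  have hp : 0 < 2 * α * H₁ := by positivity
  have hpq : 2 * α * H₁ < 2 * α * H₂ := by
    have : 0 < 2 * α := by linarith
    exact mul_lt_mul_of_pos_left hH₁₂ this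
  have hq2 : 2 * α * H₂ < 2 := by nlinarith
  clear hd1 hd2
  generalize 2 * α * H₁ = p at *
  generalize 2 * α * H₂ = q at *
  have hb2 : 0 < b ^ 2 := by positivity
  obtain ⟨m, hm0, hm1, hm⟩ : ∃ m : ℝ, 0 ≤ m ∧ q - 1 ≤ m ∧ (m = 0 ∨ m = q - 1) :=
    ⟨max 0 (q - 1), le_max_left _ _, le_max_right _ _, max_choice _ _⟩
  obtain ⟨L₁, hL₁, -, T₁⟩ := aux_main p s m hp hs hm0 (by linarith)
  obtain ⟨L₂, -, hL₂, T₂⟩ := aux_main q s m (by linarith) hs hm0 hm1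
  have hL₂ := hL₂ hm
  have hVs : 0 < V s := by
    have := rpow_pos_of_pos hs p
    have := rpow_pos_of_pos hs q
    rw [hV]; positivity
  have TV : Tendsto (fun t : ℝ => t ^ (-q) * V t) atTop (nhds (b ^ 2 / g₂)) := by
    have h := ((aux_pow (p - q) (by linarith)).const_mul (a ^ 2 / g₁)).add_const (b ^ 2 / g₂)
    rw [if_neg (by linarith), mul_zero, zero_add] at h
    refine h.congr' ?_
    filter_upwards [eventually_gt_atTop 0] with t ht
    have e1 : t ^ (p - q) = t ^ (-q) * t ^ p := by
      rw [← rpow_add ht]; congr 1; ring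
    have e2 : t ^ (-q) * t ^ q = 1 := by
      rw [← rpow_add ht]; simp
    rw [hV, e1]
    linear_combination (-(b ^ 2 / g₂)) * e2
  have TR := (T₁.const_mul (a ^ 2 / (2 * g₁))).add (T₂.const_mul (b ^ 2 / (2 * g₂)))
  have TS := (TV.mul_const (V s)).sqrt
  have hS : 0 < √(b ^ 2 / g₂ * V s) := by positivity
  refine ⟨_, ?_, q / 2 - m, ?_, (TR.div TS hS.ne').congr' ?_⟩
  · positivity
  · constructor
    · rcases hm with h | h <;> linarith
    · linarith
  · filter_upwards [eventually_gt_atTop 0] with t ht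
    have e1 : √(t ^ (-q) * V t * V s) = t ^ (-(q / 2)) * √(V t * V s) := by
      rw [mul_assoc, sqrt_mul (rpow_nonneg ht.le _), sqrt_eq_rpow (t ^ (-q)), ← rpow_mul ht.le]
      congr 2; ring
    have e2 : t ^ (q / 2 - m) = t ^ (-m) / t ^ (-(q / 2)) := by
      rw [← rpow_sub ht]; congr 1; ring
    simp only [Pi.div_apply]
    rw [e1, e2, hR, div_mul_div_comm]
    congr 1
    ring
end

section
/- Let α ∈ (0,1), H ∈ (0,1), and fix s > 0. Define Corr_H(t,s) = (t^{2αH} + s^{2αH} − (t−s)^{2αH}) / (2·t^{αH}·s^{αH}) for t ≥ s. Then there exist a constant c > 0 and an exponent d ∈ (0,1) such that lim_{t→∞} t^d · Corr_H(t,s) = c. In other words, fractional Brownian motion time-changed by an inverse α-stable subordinator has the long-range dependence property for every Hurst exponent H ∈ (0,1). -/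
open Filter Real

lemma key_D (b s : ℝ) (hs : 0 < s) :
    Tendsto (fun t : ℝ => t ^ (1 - b) * (t ^ b - (t - s) ^ b)) atTop (nhds (b * s)) := by
  have h1 : HasDerivAt (fun x : ℝ => 1 - s * x) (-s) 0 := by
    simpa using ((hasDerivAt_id (0:ℝ)).const_mul s).const_sub 1
  have h2 : HasDerivAt (fun x : ℝ => (1 - s * x) ^ b) (-(b * s)) 0 := by
    have := h1.rpow_const (p := b) (Or.inl (by norm_num))
    convert this using 1
    simp
    ring
  have h3 : HasDerivAt (fun x : ℝ => 1 - (1 - s * x) ^ b) (b * s) 0 := by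
    simpa using h2.const_sub 1
  have h4 := h3.tendsto_slope_zero_right
  have h5 := h4.comp tendsto_inv_atTop_nhdsGT_zero
  refine h5.congr' ?_
  filter_upwards [eventually_gt_atTop s] with t ht
  have ht0 : 0 < t := hs.trans ht
  have e : t - s = t * (1 - s * t⁻¹) := by field_simp
  have hp : 0 ≤ 1 - s * t⁻¹ := by
    rw [← div_eq_mul_inv, sub_nonneg, div_le_one ht0]; exact ht.le
  have e2 : t ^ (1 - b) * t ^ b = t := by
    rw [← rpow_add ht0]; simp
  rw [e, mul_rpow ht0.le hp]
  simp only [Function.comp, zero_add, inv_inv, smul_eq_mul, mul_zero, sub_zero, one_rpow, sub_self]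
  linear_combination (-(1 - (1 - s * t⁻¹) ^ b)) * e2

theorem fBm_time_changed_long_range_dependence
    (α H s : ℝ) (hα : 0 < α) (hα1 : α < 1) (hH : 0 < H) (hH1 : H < 1) (hs : 0 < s) :
    ∃ c > 0, ∃ d ∈ Set.Ioo (0 : ℝ) 1,
      Tendsto (fun t : ℝ => t ^ d *
          ((t ^ (2 * α * H) + s ^ (2 * α * H) - (t - s) ^ (2 * α * H)) /
            (2 * t ^ (α * H) * s ^ (α * H))))
        atTop (nhds c) := by
  have ha : 0 < α * H := mul_pos hα hH
  have ha1 : α * H < 1 := by nlinarith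
  rw [mul_assoc 2 α H]
  generalize α * H = a at ha ha1
  have hsa : 0 < s ^ a := rpow_pos_of_pos hs a
  have hsb : 0 < s ^ (2 * a) := rpow_pos_of_pos hs _
  have K := key_D (2 * a) s hs
  -- it suffices to treat the numerator
  suffices h : ∃ c > 0, ∃ d ∈ Set.Ioo (0 : ℝ) 1,
      Tendsto (fun t : ℝ => t ^ (d - a) * (s ^ (2 * a) + (t ^ (2 * a) - (t - s) ^ (2 * a))))
        atTop (nhds c) by
    obtain ⟨c, hc, d, hd, h⟩ := h
    refine ⟨c / (2 * s ^ a), by positivity, d, hd, (h.div_const (2 * s ^ a)).congr' ?_⟩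
    filter_upwards [eventually_gt_atTop 0] with t ht
    have : 0 < t ^ a := rpow_pos_of_pos ht a
    rw [rpow_sub ht]
    field_simp
    ring
  rcases lt_trichotomy (2 * a) 1 with h | h | h
  · refine ⟨s ^ (2 * a), hsb, a, ⟨ha, ha1⟩, ?_⟩
    have z := (tendsto_rpow_neg_atTop (y := 1 - 2 * a) (by linarith)).mul K
    have z2 := z.const_add (s ^ (2 * a))
    rw [zero_mul, add_zero] at z2
    refine z2.congr' ?_
    filter_upwards [eventually_gt_atTop 0] with t ht
    rw [← mul_assoc, ← rpow_add ht]
    simp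
  · refine ⟨s ^ (2 * a) + 2 * a * s, by positivity, a, ⟨ha, ha1⟩, ?_⟩
    refine (K.const_add (s ^ (2 * a))).congr ?_
    intro t
    simp [h]
  · refine ⟨2 * a * s, by positivity, 1 - a, ⟨by linarith, by linarith⟩, ?_⟩
    have z := ((tendsto_rpow_neg_atTop (y := 2 * a - 1) (by linarith)).mul_const
      (s ^ (2 * a))).add K
    rw [zero_mul, zero_add] at z
    refine z.congr ?_
    intro t
    rw [show 1 - a - a = 1 - 2 * a by ring, show -(2 * a - 1) = 1 - 2 * a by ring, mul_add]
end

section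
/- Let 0 < H₁ < H₂ < 1, a ∈ ℝ, b ≠ 0, and fix s > 0. Define for t ≥ s: R₁(t,s) = a²·(t^{2H₁} + s^{2H₁} − (t−s)^{2H₁})/2 + b²·(t^{2H₂} + s^{2H₂} − (t−s)^{2H₂})/2 and V₁(t) = a²·t^{2H₁} + b²·t^{2H₂}. Then there exist a constant c > 0 and an exponent d ∈ (0,1) such that lim_{t→∞} t^d · R₁(t,s)/√(V₁(t)·V₁(s)) = c. In other words, the fractional mixed fractional Brownian motion N^{H₁H₂}(a,b) has the long-range dependence property for every H₁ < H₂. -/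
open Filter Real

lemma aux_D (p s : ℝ) :
    Tendsto (fun t : ℝ => t ^ (1 - p) * (t ^ p - (t - s) ^ p)) atTop (nhds (p * s)) := by
  have h1 : HasDerivAt (fun x : ℝ => (1 - x * s) ^ p) (-(p * s)) 0 := by
    have h0 : HasDerivAt (fun x : ℝ => 1 - x * s) (-s) 0 := by
      have := ((hasDerivAt_id (0:ℝ)).mul_const s).const_sub 1
      simpa using this
    have := h0.rpow_const (p := p) (Or.inl (by simp))
    convert this using 1
    simp; ring
  have h2 := h1.tendsto_slope_zero_right
  have h3 := (h2.comp tendsto_inv_atTop_nhdsGT_zero).neg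
  simp only [neg_neg] at h3
  refine h3.congr' ?_
  filter_upwards [eventually_gt_atTop 0, eventually_gt_atTop s] with t ht hts
  have e1 : (t - s) ^ p = t ^ p * (1 - t⁻¹ * s) ^ p := by
    rw [← Real.mul_rpow ht.le]
    · congr 1; field_simp
    · have : t⁻¹ * s ≤ 1 := by
        rw [inv_mul_le_iff₀ ht]; linarith
      linarith
  have e2 : t ^ (1 - p) * t ^ p = t := by
    rw [← Real.rpow_add ht]; simp
  simp only [Function.comp, zero_add, zero_mul, sub_zero, Real.one_rpow, inv_inv, smul_eq_mul]
  rw [e1]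
  linear_combination (-(1 - (1 - t⁻¹ * s) ^ p)) * e2

lemma aux_pow_s10 (q : ℝ) (hq : q ≤ 0) :
    ∃ L : ℝ, 0 ≤ L ∧ (q = 0 → 0 < L) ∧ Tendsto (fun t : ℝ => t ^ q) atTop (nhds L) := by
  rcases hq.eq_or_lt with h | h
  · exact ⟨1, by norm_num, fun _ => by norm_num, by simp [h]⟩
  · refine ⟨0, le_rfl, fun h' => absurd h' h.ne, ?_⟩
    simpa using tendsto_rpow_neg_atTop (y := -q) (by linarith)

lemma aux_g (p s e : ℝ) (hp : 0 < p) (hs : 0 < s) (he : 0 ≤ e) (hep : p - 1 ≤ e) :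
    ∃ L : ℝ, 0 ≤ L ∧ (e = 0 ∨ e = p - 1 → 0 < L) ∧
      Tendsto (fun t : ℝ => t ^ (-e) * (t ^ p + s ^ p - (t - s) ^ p)) atTop (nhds L) := by
  obtain ⟨A, hA, hA', tA⟩ := aux_pow_s10 (-e) (by linarith)
  obtain ⟨B, hB, hB', tB⟩ := aux_pow_s10 (p - 1 - e) (by linarith)
  have hsp : 0 < s ^ p := Real.rpow_pos_of_pos hs p
  have hps : 0 < p * s := mul_pos hp hs
  refine ⟨A * s ^ p + B * (p * s), by positivity, ?_, ?_⟩
  · rintro (h | h)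
    · have := hA' (by linarith)
      positivity
    · have := hB' (by linarith)
      positivity
  · refine ((tA.mul_const (s ^ p)).add (tB.mul (aux_D p s))).congr' ?_
    filter_upwards [eventually_gt_atTop 0] with t ht
    have e2 : t ^ (p - 1 - e) * t ^ (1 - p) = t ^ (-e) := by
      rw [← Real.rpow_add ht]; congr 1; ring
    linear_combination (t ^ p - (t - s) ^ p) * e2

/-- The fractional mixed fractional Brownian motion `N^{H₁H₂}(a,b)` has the long-range
dependence property for every `H₁ < H₂` (with `b ≠ 0`): with covariance
`R₁(t,s) = a²(t^{2H₁}+s^{2H₁}-(t-s)^{2H₁})/2 + b²(t^{2H₂}+s^{2H₂}-(t-s)^{2H₂})/2`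
and variance `V₁(t) = a²t^{2H₁} + b²t^{2H₂}`, there are `c > 0` and `d ∈ (0,1)` with
`t^d · R₁(t,s)/√(V₁(t)V₁(s)) → c` as `t → ∞`. -/
theorem fmfBm_long_range_dependence
    (H₁ H₂ a b s : ℝ)
    (hH₁ : 0 < H₁) (hH₁₂ : H₁ < H₂) (hH₂ : H₂ < 1)
    (hb : b ≠ 0) (hs : 0 < s)
    (R₁ : ℝ → ℝ → ℝ)
    (hR₁ : ∀ u v : ℝ, R₁ u v =
      a ^ 2 * (u ^ (2 * H₁) + v ^ (2 * H₁) - (u - v) ^ (2 * H₁)) / 2 +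
      b ^ 2 * (u ^ (2 * H₂) + v ^ (2 * H₂) - (u - v) ^ (2 * H₂)) / 2)
    (V₁ : ℝ → ℝ)
    (hV₁ : ∀ u : ℝ, V₁ u = a ^ 2 * u ^ (2 * H₁) + b ^ 2 * u ^ (2 * H₂)) :
    ∃ c > 0, ∃ d ∈ Set.Ioo (0 : ℝ) 1,
      Tendsto (fun t : ℝ => t ^ d * (R₁ t s / Real.sqrt (V₁ t * V₁ s)))
        atTop (nhds c) := by
  obtain ⟨e, he, hep, hor, hd⟩ : ∃ e : ℝ, 0 ≤ e ∧ 2 * H₂ - 1 ≤ e ∧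
      (e = 0 ∨ e = 2 * H₂ - 1) ∧ H₂ - e ∈ Set.Ioo (0 : ℝ) 1 := by
    rcases le_total (2 * H₂ - 1) 0 with h | h
    · exact ⟨0, le_rfl, h, Or.inl rfl, by constructor <;> linarith⟩
    · exact ⟨2 * H₂ - 1, h, le_rfl, Or.inr rfl, by constructor <;> linarith⟩
  obtain ⟨L₁, hL₁, -, t₁⟩ := aux_g (2 * H₁) s e (by linarith) hs he (by linarith)
  obtain ⟨L₂, -, hL₂, t₂⟩ := aux_g (2 * H₂) s e (by linarith) hs he hep
  have hL₂ := hL₂ hor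
  have hb2 : 0 < b ^ 2 := by positivity
  have hVs : 0 < V₁ s := by
    rw [hV₁]
    have := Real.rpow_pos_of_pos hs (2 * H₁)
    have := Real.rpow_pos_of_pos hs (2 * H₂)
    positivity
  have tV : Tendsto (fun t : ℝ => a ^ 2 * t ^ (-(2 * H₂ - 2 * H₁)) + b ^ 2) atTop
      (nhds (b ^ 2)) := by
    have := ((tendsto_rpow_neg_atTop (y := 2 * H₂ - 2 * H₁) (by linarith)).const_mul
      (a ^ 2)).add_const (b ^ 2)
    simpa using this
  have tW := (tV.mul_const (V₁ s)).sqrt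
  have hW : 0 < √(b ^ 2 * V₁ s) := Real.sqrt_pos.2 (by positivity)
  have tR := ((t₁.const_mul (a ^ 2 / 2)).add (t₂.const_mul (b ^ 2 / 2))).div tW hW.ne'
  refine ⟨_, ?_, H₂ - e, hd, tR.congr' ?_⟩
  · have : 0 < a ^ 2 / 2 * L₁ + b ^ 2 / 2 * L₂ := by positivity
    positivity
  · filter_upwards [eventually_gt_atTop 0] with t ht
    have hp : 0 < t ^ H₂ := Real.rpow_pos_of_pos ht _
    have hq : t ^ (2 * H₂) = (t ^ H₂) ^ 2 := by
      rw [mul_comm, Real.rpow_mul ht.le]; norm_cast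
    have e1 : t ^ (2 * H₁) = (t ^ H₂) ^ 2 * t ^ (-(2 * H₂ - 2 * H₁)) := by
      rw [← hq, ← Real.rpow_add ht]; congr 1; ring
    have e3 : V₁ t * V₁ s =
        (t ^ H₂) ^ 2 * ((a ^ 2 * t ^ (-(2 * H₂ - 2 * H₁)) + b ^ 2) * V₁ s) := by
      rw [hV₁ t, e1, hq]; ring
    have e4 : t ^ (H₂ - e) = t ^ H₂ * t ^ (-e) := by
      rw [← Real.rpow_add ht]; congr 1
    have hpos : 0 < (a ^ 2 * t ^ (-(2 * H₂ - 2 * H₁)) + b ^ 2) * V₁ s := by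
      have := Real.rpow_pos_of_pos ht (-(2 * H₂ - 2 * H₁))
      positivity
    have hsq := Real.sqrt_pos.2 hpos
    rw [e3, Real.sqrt_mul (by positivity), Real.sqrt_sq hp.le, e4, hR₁]
    simp only [Pi.div_apply]
    generalize √((a ^ 2 * t ^ (-(2 * H₂ - 2 * H₁)) + b ^ 2) * V₁ s) = w at *
    generalize t ^ H₂ = y at hp ⊢
    rw [← mul_div_assoc, mul_comm y w, div_eq_div_iff hsq.ne' (by positivity)]
    ring
end

section
/- Let H ∈ (1/2, 1), a ∈ ℝ, b ≠ 0, and fix s > 0. Define for t ≥ s: R₂(t,s) = a²·s + b²·(t^{2H} + s^{2H} − (t−s)^{2H})/2 and V₂(t) = a²·t + b²·t^{2H}. Then lim_{t→∞} t^{1−H} · R₂(t,s)/√(V₂(t)·V₂(s)) = |b|·H·s/√(V₂(s)). In particular the mixed fractional Brownian motion M^H(a,b) has the long-range dependence property for every H > 1/2, with correlation decaying like t^{−(1−H)}. -/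
open Filter Real

/-- The mixed fractional Brownian motion `M^H(a,b)` with `H > 1/2` has long-range
dependence with correlation decaying like `t^{-(1-H)}`: with
`R₂(t,s) = a²s + b²(t^{2H}+s^{2H}-(t-s)^{2H})/2` and `V₂(t) = a²t + b²t^{2H}`,
`t^{1-H} · R₂(t,s)/√(V₂(t)V₂(s)) → |b|·H·s/√(V₂(s))` as `t → ∞`. -/
theorem mfBm_long_range_dependence
    (H a b s : ℝ)
    (hH : 1 / 2 < H) (hH1 : H < 1)
    (hb : b ≠ 0) (hs : 0 < s)
    (R₂ : ℝ → ℝ → ℝ)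
    (hR₂ : ∀ u v : ℝ, R₂ u v =
      a ^ 2 * v + b ^ 2 * (u ^ (2 * H) + v ^ (2 * H) - (u - v) ^ (2 * H)) / 2)
    (V₂ : ℝ → ℝ)
    (hV₂ : ∀ u : ℝ, V₂ u = a ^ 2 * u + b ^ 2 * u ^ (2 * H)) :
    Tendsto (fun t : ℝ => t ^ (1 - H) * (R₂ t s / Real.sqrt (V₂ t * V₂ s)))
      atTop (nhds (|b| * H * s / Real.sqrt (V₂ s))) := by
  have hK : Tendsto (fun t : ℝ => t * (1 - (1 - s * t⁻¹) ^ (2 * H))) atTop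
      (nhds (2 * H * s)) := by
    have h1 : HasDerivAt (fun u : ℝ => 1 - s * u) (-s) 0 := by
      simpa using ((hasDerivAt_id (0 : ℝ)).const_mul s).const_sub 1
    have h2 := h1.rpow_const (p := 2 * H) (Or.inl (by norm_num))
    have h3 := h2.tendsto_slope_zero_right.comp tendsto_inv_atTop_nhdsGT_zero
    have h4 := h3.neg
    refine (h4.congr fun t => ?_).trans (le_of_eq ?_)
    · simp
      ring
    · simp
      ring_nf
  have hz : Tendsto (fun t : ℝ => t ^ (1 - 2 * H)) atTop (nhds 0) := by
    have := tendsto_rpow_neg_atTop (y := 2 * H - 1) (by linarith)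
    simpa using this
  have hN : Tendsto (fun t : ℝ => (a ^ 2 * s + b ^ 2 * s ^ (2 * H) / 2) * t ^ (1 - 2 * H)
      + b ^ 2 / 2 * (t * (1 - (1 - s * t⁻¹) ^ (2 * H)))) atTop (nhds (b ^ 2 * H * s)) := by
    have := (hz.const_mul (a ^ 2 * s + b ^ 2 * s ^ (2 * H) / 2)).add (hK.const_mul (b ^ 2 / 2))
    convert this using 2
    ring
  have hD : Tendsto (fun t : ℝ => √(a ^ 2 * t ^ (1 - 2 * H) + b ^ 2)) atTop (nhds |b|) := by
    have := ((hz.const_mul (a ^ 2)).add_const (b ^ 2)).sqrt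
    simpa [Real.sqrt_sq_eq_abs] using this
  have hb' : |b| ≠ 0 := abs_ne_zero.mpr hb
  have hL := (hN.div hD hb').div_const (√(V₂ s))
  have hlim : b ^ 2 * H * s / |b| / √(V₂ s) = |b| * H * s / √(V₂ s) := by
    congr 1
    rw [← sq_abs b]
    field_simp
  rw [hlim] at hL
  refine hL.congr' ?_
  filter_upwards [eventually_gt_atTop s] with t hts
  have ht : 0 < t := hs.trans hts
  have hpos : 0 < t ^ H := rpow_pos_of_pos ht _
  have e2 : t ^ (2 * H) = t ^ H * t ^ H := by rw [← rpow_add ht]; ring_nf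
  have e3 : t ^ (1 - 2 * H) = t / (t ^ H * t ^ H) := by rw [rpow_sub ht, rpow_one, e2]
  have e1 : t ^ (1 - H) = t / t ^ H := by rw [rpow_sub ht, rpow_one]
  have hV0 : 0 ≤ V₂ t := by rw [hV₂]; positivity
  have hVt : √(V₂ t) = t ^ H * √(a ^ 2 * t ^ (1 - 2 * H) + b ^ 2) := by
    have : V₂ t = (t ^ H) ^ 2 * (a ^ 2 * t ^ (1 - 2 * H) + b ^ 2) := by
      rw [hV₂, e2, e3]; field_simp
    rw [this, Real.sqrt_mul (sq_nonneg _), Real.sqrt_sq hpos.le]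
  have hq : (t - s) ^ (2 * H) = t ^ H * t ^ H * (1 - s * t⁻¹) ^ (2 * H) := by
    have h0 : 0 ≤ 1 - s * t⁻¹ := by
      rw [← div_eq_mul_inv, sub_nonneg, div_le_one ht]; exact hts.le
    rw [← e2, ← mul_rpow ht.le h0]
    congr 1
    field_simp
  have hDp : 0 < √(a ^ 2 * t ^ (1 - 2 * H) + b ^ 2) := by
    apply Real.sqrt_pos.mpr; positivity
  have hVs : 0 < √(V₂ s) := by
    apply Real.sqrt_pos.mpr; rw [hV₂]; positivity
  rw [Real.sqrt_mul hV0, hVt, hR₂, hq, e1, e2]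
  simp only [Pi.div_apply]
  generalize √(a ^ 2 * t ^ (1 - 2 * H) + b ^ 2) = D at *
  generalize √(V₂ s) = E at *
  rw [e3]
  generalize (1 - s * t⁻¹) ^ (2 * H) = Q at *
  generalize t ^ H = P at *
  field_simp
  ring
end
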